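/- arXiv:2501.16520 — 4 statements merged into one kernel-verified Lean document; each statement's English description precedes it below -/
import Mathlib

section
/- Let α > 0 and let t ↦ (x(t), y(t)), t ≥ 0, be a continuously differentiable solution of the safe gradient flow (SGF), under Assumptions A1 and A2. Then the dual multiplier is uniformly bounded along the trajectory: ‖λ(x(t), y(t))‖ ≤ (1/μ_g²) (C_{yx}^g C_x^f + C_{yy}^g C_y^f + α ‖∇_y g(x(0), y(0))‖) for all t ≥ 0. -/
open Set MeasureTheory
open scoped NNReal RealInnerProductSpace

noncomputable section

/-- `Vec k` is the Euclidean space `ℝ^k`. -/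
abbrev Vec (k : ℕ) : Type := EuclideanSpace ℝ (Fin k)

/-- Partial gradient of `f(x, y)` with respect to `x`. -/
noncomputable def gradx {n m : ℕ} (f : Vec n → Vec m → ℝ) (x : Vec n) (y : Vec m) : Vec n :=
  gradient (fun x' => f x' y) x

/-- Partial gradient of `f(x, y)` with respect to `y`. -/
noncomputable def grady {n m : ℕ} (f : Vec n → Vec m → ℝ) (x : Vec n) (y : Vec m) : Vec m :=
  gradient (fun y' => f x y') y

lemma aux_grady_contDiff {n m : ℕ} (g : Vec n → Vec m → ℝ)
    (hg : ContDiff ℝ 2 (Function.uncurry g)) :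
    ContDiff ℝ 1 (fun p : Vec n × Vec m => grady g p.1 p.2) := by
  have h1 : ∀ p : Vec n × Vec m, grady g p.1 p.2 =
      (InnerProductSpace.toDual ℝ (Vec m)).symm
        ((fderiv ℝ (Function.uncurry g) p).comp (ContinuousLinearMap.inr ℝ (Vec n) (Vec m))) := by
    intro p
    have hd : HasFDerivAt (Function.uncurry g) (fderiv ℝ (Function.uncurry g) p) (p.1, p.2) :=
      ((hg.differentiable (by norm_num)) p).hasFDerivAt
    have h2 := hd.comp p.2 (hasFDerivAt_prodMk_right p.1 p.2)
    have h3 : fderiv ℝ (fun y' => g p.1 y') p.2 = _ := h2.fderiv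
    rw [grady, gradient, h3]
  have h2 : (fun p : Vec n × Vec m => grady g p.1 p.2) = _ := funext h1
  rw [h2]
  have h4 : ContDiff ℝ 1 (fderiv ℝ (Function.uncurry g)) :=
    hg.fderiv_right (by norm_num)
  have h5 : ContDiff ℝ 1 (fun p => (fderiv ℝ (Function.uncurry g) p).comp
      (ContinuousLinearMap.inr ℝ (Vec n) (Vec m))) := h4.clm_comp contDiff_const
  exact ((InnerProductSpace.toDual ℝ (Vec m)).symm.toContinuousLinearEquiv.contDiff).comp h5

lemma aux_slice {n m : ℕ} (g : Vec n → Vec m → ℝ)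
    (hg : ContDiff ℝ 2 (Function.uncurry g)) (x : Vec n) : ContDiff ℝ 2 (g x) :=
  hg.comp (contDiff_const.prodMk contDiff_id)

lemma aux_hasFDerivAt {n m : ℕ} (g : Vec n → Vec m → ℝ)
    (hg : ContDiff ℝ 2 (Function.uncurry g)) (x : Vec n) (y : Vec m) :
    HasFDerivAt (g x) (InnerProductSpace.toDual ℝ (Vec m) (grady g x y)) y := by
  have := (((aux_slice g hg x).differentiable (by norm_num)) y).hasGradientAt
  exact this.hasFDerivAt

lemma aux_symm {n m : ℕ} (g : Vec n → Vec m → ℝ)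
    (hg : ContDiff ℝ 2 (Function.uncurry g)) (x : Vec n) (y : Vec m)
    (A : Vec m →L[ℝ] Vec m) (hA : HasFDerivAt (fun y' => grady g x y') A y) (u v : Vec m) :
    ⟪A u, v⟫ = ⟪u, A v⟫ := by
  have hd : ContDiff ℝ 1 (fderiv ℝ (g x)) := (aux_slice g hg x).fderiv_right (by norm_num)
  have h1 : HasFDerivAt (fderiv ℝ (g x)) (fderiv ℝ (fderiv ℝ (g x)) y) y :=
    ((hd.differentiable (by norm_num)) y).hasFDerivAt
  have key : ∀ u v : Vec m, ⟪A u, v⟫ = fderiv ℝ (fderiv ℝ (g x)) y u v := by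
    intro u v
    have e1 := hA.inner ℝ (hasFDerivAt_const v y)
    have e2 := h1.clm_apply (hasFDerivAt_const v y)
    have e3 : (fun y' => ⟪grady g x y', v⟫) = fun y' => fderiv ℝ (g x) y' v := by
      ext y'
      rw [(aux_hasFDerivAt g hg x y').fderiv, InnerProductSpace.toDual_apply_apply]
    rw [e3] at e1
    have e4 := congrArg (fun L => L u) (e1.unique e2)
    simpa using e4
  have h2 := second_derivative_symmetric
    (fun z => (((aux_slice g hg x).differentiable (by norm_num)) z).hasFDerivAt) h1 u v
  rw [key, h2, ← key, real_inner_comm]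

lemma aux_mono {n m : ℕ} (g : Vec n → Vec m → ℝ)
    (hg : ContDiff ℝ 2 (Function.uncurry g)) (x : Vec n) (y : Vec m) (μ : ℝ)
    (hsc : StrongConvexOn Set.univ μ (g x))
    (A : Vec m →L[ℝ] Vec m) (hA : HasFDerivAt (fun y' => grady g x y') A y) (u : Vec m) :
    μ * ‖u‖ ^ 2 ≤ ⟪A u, u⟫ := by
  rw [strongConvexOn_iff_convex] at hsc
  have hline : ∀ s : ℝ, HasDerivAt (fun s : ℝ => y + s • u) u s := by
    intro s
    simpa using ((hasDerivAt_id s).smul_const u).const_add y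
  have hconv : ConvexOn ℝ Set.univ
      (fun s : ℝ => g x (y + s • u) - μ / 2 * ‖y + s • u‖ ^ 2) := by
    have := hsc.comp_affineMap (AffineMap.lineMap y (y + u) : ℝ →ᵃ[ℝ] Vec m)
    have e : ((fun z => g x z - μ / 2 * ‖z‖ ^ 2) ∘ (AffineMap.lineMap y (y + u) : ℝ →ᵃ[ℝ] Vec m))
        = (fun s : ℝ => g x (y + s • u) - μ / 2 * ‖y + s • u‖ ^ 2) := by
      funext s
      simp [AffineMap.lineMap_apply, add_comm]
    rw [e] at this
    exact this
  have hder : ∀ s : ℝ, HasDerivAt (fun s : ℝ => g x (y + s • u) - μ / 2 * ‖y + s • u‖ ^ 2)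
      (⟪grady g x (y + s • u), u⟫ - μ / 2 * (2 * ⟪y + s • u, u⟫)) s := by
    intro s
    have h1 := (aux_hasFDerivAt g hg x (y + s • u)).comp_hasDerivAt s (hline s)
    have h2 := ((hline s).norm_sq).const_mul (μ / 2)
    rw [InnerProductSpace.toDual_apply_apply] at h1
    exact HasDerivAt.sub h1 h2
  have hmono : Monotone (fun s : ℝ =>
      ⟪grady g x (y + s • u), u⟫ - μ / 2 * (2 * ⟪y + s • u, u⟫)) := by
    have h1 := hconv.monotoneOn_deriv (fun s _ => (hder s).differentiableAt)
    have h2 : deriv (fun s : ℝ => g x (y + s • u) - μ / 2 * ‖y + s • u‖ ^ 2) = _ :=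
      funext fun s => (hder s).deriv
    rw [h2] at h1
    exact monotoneOn_univ.1 h1
  have hA' : HasFDerivAt (fun y' => grady g x y') A (y + (0 : ℝ) • u) := by simpa using hA
  have h1 := hA'.comp_hasDerivAt (0 : ℝ) (hline 0)
  have h2 := (h1.inner ℝ (hasDerivAt_const (0 : ℝ) u)).sub
    ((((hline 0).inner ℝ (hasDerivAt_const (0 : ℝ) u)).const_mul 2).const_mul (μ / 2))
  have h3 := h2.deriv
  have h4 : 0 ≤ deriv (fun s : ℝ =>
      ⟪grady g x (y + s • u), u⟫ - μ / 2 * (2 * ⟪y + s • u, u⟫)) 0 := hmono.deriv_nonneg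
  have h5 := h3.symm.trans_ge h4
  simp only [inner_zero_right, zero_add, real_inner_self_eq_norm_sq] at h5
  linarith

lemma aux_decay {n m : ℕ} (g : Vec n → Vec m → ℝ)
    (hg : ContDiff ℝ 2 (Function.uncurry g)) (x : ℝ → Vec n) (y : ℝ → Vec m)
    (x' : ℝ → Vec n) (y' : ℝ → Vec m) (α : ℝ) (hα : 0 < α)
    (Gyx : Vec n → Vec m → Vec n →L[ℝ] Vec m)
    (Gyy : Vec n → Vec m → Vec m →L[ℝ] Vec m)
    (hGyx : ∀ x y, HasFDerivAt (fun x' => grady g x' y) (Gyx x y) x)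
    (hGyy : ∀ x y, HasFDerivAt (fun y' => grady g x y') (Gyy x y) y)
    (hx : ∀ t, 0 ≤ t → HasDerivAt x (x' t) t)
    (hy : ∀ t, 0 ≤ t → HasDerivAt y (y' t) t)
    (h : ∀ t, 0 ≤ t → Gyx (x t) (y t) (x' t) + Gyy (x t) (y t) (y' t)
      = -(α • grady g (x t) (y t))) (t : ℝ) (ht : 0 ≤ t) :
    ‖grady g (x t) (y t)‖ ≤ ‖grady g (x 0) (y 0)‖ := by
  have hC := aux_grady_contDiff g hg
  have hphi : ∀ t, 0 ≤ t → HasDerivAt (fun t => grady g (x t) (y t))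
      (-(α • grady g (x t) (y t))) t := by
    intro t ht
    have hD := ((hC.differentiable (by norm_num)) (x t, y t)).hasFDerivAt
    set D := fderiv ℝ (fun p : Vec n × Vec m => grady g p.1 p.2) (x t, y t) with hDdef
    have e1 : D.comp (ContinuousLinearMap.inl ℝ _ _) = Gyx (x t) (y t) :=
      by
        have h0 := HasFDerivAt.comp (g := fun p : Vec n × Vec m => grady g p.1 p.2)
          (f := fun e => (e, y t)) (x t) hD (hasFDerivAt_prodMk_left (x t) (y t))
        exact h0.unique (hGyx (x t) (y t))
    have e2 : D.comp (ContinuousLinearMap.inr ℝ _ _) = Gyy (x t) (y t) :=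
      by
        have h0 := HasFDerivAt.comp (g := fun p : Vec n × Vec m => grady g p.1 p.2)
          (f := fun e => (x t, e)) (y t) hD (hasFDerivAt_prodMk_right (x t) (y t))
        exact h0.unique (hGyy (x t) (y t))
    have h1 := hD.comp_hasDerivAt t ((hx t ht).prodMk (hy t ht))
    have h2 : D (x' t, y' t) = -(α • grady g (x t) (y t)) := by
      rw [← h t ht, ← e1, ← e2]
      simp only [ContinuousLinearMap.comp_apply, ContinuousLinearMap.inl_apply,
        ContinuousLinearMap.inr_apply, ← map_add]
      simp
    rw [h2] at h1
    exact h1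
  have hanti : AntitoneOn (fun t => ‖grady g (x t) (y t)‖ ^ 2) (Set.Ici 0) := by
    apply antitoneOn_of_deriv_nonpos (convex_Ici 0)
    · intro s hs
      exact ((hphi s hs).norm_sq).continuousAt.continuousWithinAt
    · intro s hs
      rw [interior_Ici] at hs
      exact ((hphi s (le_of_lt hs)).norm_sq).differentiableAt.differentiableWithinAt
    · intro s hs
      rw [interior_Ici] at hs
      rw [((hphi s (le_of_lt hs)).norm_sq).deriv, inner_neg_right, inner_smul_right,
        real_inner_self_eq_norm_sq]
      have : 0 ≤ α * ‖grady g (x s) (y s)‖ ^ 2 := by positivity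
      linarith
  have := hanti (Set.mem_Ici.2 le_rfl) (Set.mem_Ici.2 ht) ht
  exact le_of_sq_le_sq this (norm_nonneg _)

/-- along the safe gradient flow (SGF), the dual multiplier is uniformly bounded:
`‖λ(x(t), y(t))‖ ≤ (1/μ_g²)(C_{yx}^g C_x^f + C_{yy}^g C_y^f + α ‖∇_y g(x(0), y(0))‖)`. -/
theorem stmt_6 {n m : ℕ} (f g : Vec n → Vec m → ℝ)
    -- Assumption A1
    (hf : ContDiff ℝ 1 (Function.uncurry f))
    (Cxf Cyf : ℝ) (hCxf : 0 < Cxf) (hCyf : 0 < Cyf)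
    (hfxB : ∀ x y, ‖gradx f x y‖ ≤ Cxf)
    (hfyB : ∀ x y, ‖grady f x y‖ ≤ Cyf)
    (Lxf Lyf : ℝ≥0)
    (hfxL : LipschitzWith Lxf fun p : Vec n × Vec m => gradx f p.1 p.2)
    (hfyL : LipschitzWith Lyf fun p : Vec n × Vec m => grady f p.1 p.2)
    -- Assumption A2
    (hg : ContDiff ℝ 2 (Function.uncurry g))
    (μg : ℝ) (hμg : 0 < μg)
    (hsc : ∀ x, StrongConvexOn Set.univ μg (g x))
    (Lyyg Lyxg : ℝ≥0)
    (hgyLy : ∀ x, LipschitzWith Lyyg fun y => grady g x y)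
    (hgyLx : ∀ y, LipschitzWith Lyxg fun x => grady g x y)
    (Gyx : Vec n → Vec m → Vec n →L[ℝ] Vec m)
    (Gyy : Vec n → Vec m → Vec m →L[ℝ] Vec m)
    (hGyx : ∀ x y, HasFDerivAt (fun x' => grady g x' y) (Gyx x y) x)
    (hGyy : ∀ x y, HasFDerivAt (fun y' => grady g x y') (Gyy x y) y)
    (Cyxg Cyyg : ℝ≥0)
    (hGyxL : LipschitzWith Cyxg fun p : Vec n × Vec m => Gyx p.1 p.2)
    (hGyyL : LipschitzWith Cyyg fun p : Vec n × Vec m => Gyy p.1 p.2)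
    -- (as noted in the paper, `C_{yx}^g` and `C_{yy}^g` also bound the operator norms
    -- of the Hessian blocks)
    (hGyxB : ∀ x y, ‖Gyx x y‖ ≤ (Cyxg : ℝ))
    (hGyyB : ∀ x y, ‖Gyy x y‖ ≤ (Cyyg : ℝ))
    -- the safe gradient flow (SGF) for a parameter `α > 0`, on the time interval `t ≥ 0`:
    -- `lam t` is the dual multiplier `λ(x(t), y(t))`, characterized as the solution of
    -- `(∇²_{yx}g (∇²_{yx}g)ᵀ + (∇²_{yy}g)²) λ = −(∇²_{yx}g ∇ₓf + ∇²_{yy}g ∇_y f − α ∇_y g)`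
    (α : ℝ) (hα : 0 < α)
    (x : ℝ → Vec n) (y : ℝ → Vec m) (lam : ℝ → Vec m)
    (hlam : ∀ t, 0 ≤ t →
      (Gyx (x t) (y t) ∘L ContinuousLinearMap.adjoint (Gyx (x t) (y t))
        + Gyy (x t) (y t) ∘L Gyy (x t) (y t)) (lam t)
      = -(Gyx (x t) (y t) (gradx f (x t) (y t)) + Gyy (x t) (y t) (grady f (x t) (y t))
          - α • grady g (x t) (y t)))
    (hx : ∀ t, 0 ≤ t → HasDerivAt x
      (-gradx f (x t) (y t) - ContinuousLinearMap.adjoint (Gyx (x t) (y t)) (lam t)) t)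
    (hy : ∀ t, 0 ≤ t → HasDerivAt y
      (-grady f (x t) (y t) - Gyy (x t) (y t) (lam t)) t)
    :
    ∀ t, 0 ≤ t →
      ‖lam t‖ ≤ (1 / μg ^ 2) *
        ((Cyxg : ℝ) * Cxf + (Cyyg : ℝ) * Cyf + α * ‖grady g (x 0) (y 0)‖) := by
  intro t ht
  have hdec := aux_decay g hg x y _ _ α hα Gyx Gyy hGyx hGyy hx hy (by
    intro t ht
    have := hlam t ht
    simp only [add_apply, ContinuousLinearMap.comp_apply] at this
    simp only [map_sub, map_neg]
    rw [← sub_eq_zero] at this ⊢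
    rw [← neg_eq_zero, ← this]
    abel) t ht
  have hM := hlam t ht
  have hmono := aux_mono g hg (x t) (y t) μg (hsc _) _ (hGyy _ _) (lam t)
  have hsym := aux_symm g hg (x t) (y t) _ (hGyy _ _) (Gyy (x t) (y t) (lam t)) (lam t)
  have hfx := hfxB (x t) (y t)
  have hfy := hfyB (x t) (y t)
  have hB1 := hGyxB (x t) (y t)
  have hB2 := hGyyB (x t) (y t)
  set A := Gyx (x t) (y t)
  set B := Gyy (x t) (y t)
  set l := lam t
  set K := (Cyxg : ℝ) * Cxf + (Cyyg : ℝ) * Cyf + α * ‖grady g (x 0) (y 0)‖ with hK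
  have hr : ‖-(A (gradx f (x t) (y t)) + B (grady f (x t) (y t)) - α • grady g (x t) (y t))‖
      ≤ K := by
    rw [norm_neg]
    refine (norm_sub_le _ _).trans (add_le_add ((norm_add_le _ _).trans (add_le_add ?_ ?_)) ?_)
    · exact (A.le_opNorm _).trans (mul_le_mul hB1 hfx (norm_nonneg _) (by positivity))
    · exact (B.le_opNorm _).trans (mul_le_mul hB2 hfy (norm_nonneg _) (by positivity))
    · rw [norm_smul, Real.norm_of_nonneg hα.le]
      exact mul_le_mul_of_nonneg_left hdec hα.le
  rw [← hM] at hr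
  have h1 := real_inner_le_norm ((A ∘L ContinuousLinearMap.adjoint A + B ∘L B) l) l
  rw [add_apply, inner_add_left, ContinuousLinearMap.comp_apply,
    ContinuousLinearMap.comp_apply, hsym, ← ContinuousLinearMap.adjoint_inner_right,
    real_inner_self_eq_norm_sq, real_inner_self_eq_norm_sq] at h1
  rw [add_apply, ContinuousLinearMap.comp_apply,
    ContinuousLinearMap.comp_apply] at hr
  have h2 : μg * ‖l‖ ^ 2 ≤ ‖B l‖ * ‖l‖ := hmono.trans (real_inner_le_norm _ _)
  rw [one_div, ← div_eq_inv_mul, le_div_iff₀ (by positivity)]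
  rcases (norm_nonneg l).eq_or_lt with h0 | h0
  · rw [← h0]
    have : 0 ≤ K := by positivity
    simpa using this
  · have h3 : μg * ‖l‖ ≤ ‖B l‖ := by
      refine le_of_mul_le_mul_right ?_ h0
      linarith
    have h4 : (μg * ‖l‖) ^ 2 ≤ ‖B l‖ ^ 2 := pow_le_pow_left₀ (by positivity) h3 2
    refine le_of_mul_le_mul_right ?_ h0
    have h5 := mul_le_mul_of_nonneg_right hr h0.le
    have h6 := sq_nonneg ‖ContinuousLinearMap.adjoint A l‖
    linarith

end
end

section
/- Suppose Assumption A2 holds. Then for every (x,y) ∈ ℝⁿ × ℝᵐ and all α, ε > 0, the QP (RXSF) at (x,y) is feasible, i.e., there exists (u,v) ∈ ℝⁿ × ℝᵐ with ∇_x h(x,y)ᵀ u + ∇_y h(x,y)ᵀ v + α(h(x,y) − ε²) ≤ 0: if h(x,y) ≤ ε² then (u,v) = (0,0) is feasible, and otherwise (u,v) = (0, −(α(h(x,y) − ε²)/(∇_y h(x,y)ᵀ ∇_y g(x,y))) ∇_y g(x,y)) is feasible (note ∇_y h(x,y)ᵀ ∇_y g(x,y) ≥ 2 μ_g ‖∇_y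 g(x,y)‖² > 0 when h(x,y) > ε²). -/
open Set MeasureTheory
open scoped NNReal RealInnerProductSpace

noncomputable section

/-- The compact constraint function `h(x,y) = ‖∇_y g(x,y)‖²`. -/
noncomputable def hbar {n m : ℕ} (g : Vec n → Vec m → ℝ) (x : Vec n) (y : Vec m) : ℝ :=
  ‖grady g x y‖ ^ 2

theorem hess_lower {m : ℕ} (φ : Vec m → ℝ) (hφ : Differentiable ℝ φ) (μ : ℝ)
    (hsc : StrongConvexOn Set.univ μ φ) (G : Vec m →L[ℝ] Vec m) (y p : Vec m)
    (hG : HasFDerivAt (fun y' => gradient φ y') G y) :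
    μ * ‖p‖ ^ 2 ≤ ⟪G p, p⟫ := by
  have hline : ∀ t : ℝ, HasDerivAt (fun t : ℝ => y + t • p) p t := fun t => by
    simpa using ((hasDerivAt_id t).smul_const p).const_add y
  have hc := strongConvexOn_iff_convex.1 hsc
  have hc2 : ConvexOn ℝ Set.univ
      (fun t : ℝ => φ (y + t • p) - μ / 2 * ‖y + t • p‖ ^ 2) := by
    have := hc.comp_affineMap (AffineMap.lineMap y (y + p) : ℝ →ᵃ[ℝ] Vec m)
    refine (this.congr ?_)
    intro t _
    simp [AffineMap.lineMap_apply, add_comm]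
  have hd : ∀ t : ℝ, HasDerivAt (fun t : ℝ => φ (y + t • p) - μ / 2 * ‖y + t • p‖ ^ 2)
      (⟪gradient φ (y + t • p), p⟫ - μ * ⟪y + t • p, p⟫) t := by
    intro t
    have h1 := (hφ (y + t • p)).hasFDerivAt.comp_hasDerivAt t (hline t)
    have h2 := (hline t).norm_sq.const_mul (μ / 2)
    refine (h1.sub h2).congr_deriv ?_
    rw [inner_gradient_left]
    ring
  have hmono : Monotone (fun t : ℝ => ⟪gradient φ (y + t • p), p⟫ - μ * ⟪y + t • p, p⟫) := by
    have := hc2.monotoneOn_deriv (fun t _ => (hd t).differentiableAt)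
    rw [monotoneOn_univ] at this
    have e := funext (fun t => (hd t).deriv)
    rwa [e] at this
  have hG' : HasFDerivAt (fun y' => gradient φ y') G (y + (0 : ℝ) • p) := by simpa using hG
  have h3 := (hG'.comp_hasDerivAt (0 : ℝ) (hline 0)).inner ℝ (hasDerivAt_const (0 : ℝ) p)
  have h4 := ((hline 0).inner ℝ (hasDerivAt_const (0 : ℝ) p)).const_mul μ
  have h5 := (h3.sub h4).nonneg_of_monotone hmono
  simp only [inner_zero_right, zero_add, real_inner_self_eq_norm_sq] at h5
  linarith

/-- under Assumption A2, the QP (RXSF) is always feasible: if `h(x,y) ≤ ε²` then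
`(0,0)` is feasible, and otherwise `(0, −(α(h−ε²)/(∇_y hᵀ ∇_y g)) ∇_y g)` is feasible (and
`∇_y hᵀ ∇_y g ≥ 2 μ_g ‖∇_y g‖² > 0` in that case). -/
theorem stmt_12 {n m : ℕ} (f g : Vec n → Vec m → ℝ)
    (hf : ContDiff ℝ 1 (Function.uncurry f))
    -- Assumption A2
    (hg : ContDiff ℝ 2 (Function.uncurry g))
    (μg : ℝ) (hμg : 0 < μg)
    (hsc : ∀ x, StrongConvexOn Set.univ μg (g x))
    (Lyyg Lyxg : ℝ≥0)
    (hgyLy : ∀ x, LipschitzWith Lyyg fun y => grady g x y)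
    (hgyLx : ∀ y, LipschitzWith Lyxg fun x => grady g x y)
    (Gyx : Vec n → Vec m → Vec n →L[ℝ] Vec m)
    (Gyy : Vec n → Vec m → Vec m →L[ℝ] Vec m)
    (hGyx : ∀ x y, HasFDerivAt (fun x' => grady g x' y) (Gyx x y) x)
    (hGyy : ∀ x y, HasFDerivAt (fun y' => grady g x y') (Gyy x y) y)
    (Cyxg Cyyg : ℝ≥0)
    (hGyxL : LipschitzWith Cyxg fun p : Vec n × Vec m => Gyx p.1 p.2)
    (hGyyL : LipschitzWith Cyyg fun p : Vec n × Vec m => Gyy p.1 p.2)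
    : ∀ (x : Vec n) (y : Vec m) (α ε : ℝ), 0 < α → 0 < ε →
    -- the QP (RXSF) is feasible,
    (∃ (u : Vec n) (v : Vec m),
      ⟪gradx (hbar g) x y, u⟫ + ⟪grady (hbar g) x y, v⟫ + α * (hbar g x y - ε ^ 2) ≤ 0) ∧
    -- if `h(x,y) ≤ ε²` then `(0,0)` is feasible,
    (hbar g x y ≤ ε ^ 2 →
      ⟪gradx (hbar g) x y, (0 : Vec n)⟫ + ⟪grady (hbar g) x y, (0 : Vec m)⟫
        + α * (hbar g x y - ε ^ 2) ≤ 0) ∧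
    -- and if `h(x,y) > ε²` then `∇_y hᵀ ∇_y g ≥ 2 μ_g ‖∇_y g‖² > 0` and the explicit
    -- pair `(0, −(α(h−ε²)/(∇_y hᵀ ∇_y g)) ∇_y g)` is feasible.
    (ε ^ 2 < hbar g x y →
      (0 < ⟪grady (hbar g) x y, grady g x y⟫ ∧
       2 * μg * ‖grady g x y‖ ^ 2 ≤ ⟪grady (hbar g) x y, grady g x y⟫ ∧
       ⟪gradx (hbar g) x y, (0 : Vec n)⟫
         + ⟪grady (hbar g) x y,
             -(α * (hbar g x y - ε ^ 2) / ⟪grady (hbar g) x y, grady g x y⟫) • grady g x y⟫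
         + α * (hbar g x y - ε ^ 2) ≤ 0)) := by
  intro x y α ε hα hε
  have hdiff : Differentiable ℝ (g x) := by
    have h1 : Differentiable ℝ (Function.uncurry g) := hg.differentiable (by norm_num)
    exact h1.comp ((differentiable_const x).prodMk differentiable_id)
  have key : ⟪grady (hbar g) x y, grady g x y⟫ = 2 * ⟪Gyy x y (grady g x y), grady g x y⟫ := by
    have h := (hGyy x y).norm_sq
    have h' : HasFDerivAt (fun y' => hbar g x y') _ y := h
    have e : grady (hbar g) x y = gradient (fun y' => hbar g x y') y := rfl
    rw [e, inner_gradient_left, h'.fderiv]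
    simp [real_inner_comm]
  have low := hess_lower (g x) hdiff μg (hsc x) (Gyy x y) y (grady g x y) (hGyy x y)
  have h0 : hbar g x y ≤ ε ^ 2 →
      ⟪gradx (hbar g) x y, (0 : Vec n)⟫ + ⟪grady (hbar g) x y, (0 : Vec m)⟫
        + α * (hbar g x y - ε ^ 2) ≤ 0 := by
    intro h
    simp only [inner_zero_right, zero_add]
    exact mul_nonpos_of_nonneg_of_nonpos hα.le (by linarith)
  have h1 : ε ^ 2 < hbar g x y →
      (0 < ⟪grady (hbar g) x y, grady g x y⟫ ∧
       2 * μg * ‖grady g x y‖ ^ 2 ≤ ⟪grady (hbar g) x y, grady g x y⟫ ∧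
       ⟪gradx (hbar g) x y, (0 : Vec n)⟫
         + ⟪grady (hbar g) x y,
             -(α * (hbar g x y - ε ^ 2) / ⟪grady (hbar g) x y, grady g x y⟫) • grady g x y⟫
         + α * (hbar g x y - ε ^ 2) ≤ 0) := by
    intro h
    have hp : 0 < ‖grady g x y‖ ^ 2 := lt_trans (by positivity) h
    have h2 : 2 * μg * ‖grady g x y‖ ^ 2 ≤ ⟪grady (hbar g) x y, grady g x y⟫ := by
      rw [key]; linarith
    have h3 : 0 < ⟪grady (hbar g) x y, grady g x y⟫ := lt_of_lt_of_le (by positivity) h2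
    refine ⟨h3, h2, ?_⟩
    rw [inner_zero_right, inner_smul_right, neg_mul, div_mul_cancel₀ _ h3.ne']
    linarith
  refine ⟨?_, h0, h1⟩
  rcases le_or_gt (hbar g x y) (ε ^ 2) with h | h
  · exact ⟨_, _, h0 h⟩
  · exact ⟨_, _, (h1 h).2.2⟩

end
end

section
/- Suppose Assumptions A1 and A2 hold and let α, ε > 0. Let t ↦ (x(t), y(t)), t ≥ 0, be a continuously differentiable solution of the relaxed safe gradient flow (RXGF) with h(x(0), y(0)) ≤ ε². Set c := μ_g² / (μ_g² + (L_{yx}^g)²) and define E(t) := f(x(t), y(t)) − f*_ε + c ∫₀ᵗ ‖F(x(τ), y(τ))‖² dτ, where f*_ε is the optimal value of the relaxed problem min f(x,y) subject to h(x,y) ≤ ε². Then E(t) ≤ E(0) for all t ≥ 0, and in particular (1/t) ∫₀ᵗ ‖∇ℓ(x(τ))‖² dτ ≤ 2 M₁² ε² / μ_g² + (2/(c t)) (f(x(0), y(0)) − f*_ε) for all t > 0. -/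
open Set MeasureTheory
open scoped NNReal RealInnerProductSpace

noncomputable section

/-- The surrogate map `F(x,y) = ∇ₓ f(x,y) − (∇²_{yx} g(x,y))ᵀ v(x,y)`. -/
noncomputable def Fsur {n m : ℕ} (f : Vec n → Vec m → ℝ)
    (Gyx : Vec n → Vec m → Vec n →L[ℝ] Vec m) (v : Vec n → Vec m → Vec m)
    (x : Vec n) (y : Vec m) : Vec n :=
  gradx f x y - ContinuousLinearMap.adjoint (Gyx x y) (v x y)

section aux
variable {E : Type*} [NormedAddCommGroup E] [InnerProductSpace ℝ E] [CompleteSpace E]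

theorem aux_mono_s14 {φ : E → ℝ} {u : E → E} {μ : ℝ} (hu : ∀ y, HasGradientAt φ (u y) y)
    (hs : StrongConvexOn Set.univ μ φ) (y w : E) :
    Monotone (fun s : ℝ => ⟪u (y + s • w), w⟫ - μ * s * ‖w‖ ^ 2) := by
  have hc := strongConvexOn_iff_convex.1 hs
  have hk : ConvexOn ℝ Set.univ (fun s : ℝ => φ (y + s • w) - μ / 2 * ‖y + s • w‖ ^ 2) := by
    refine ⟨convex_univ, ?_⟩
    intro a _ b _ p q hp hq hpq
    have := hc.2 (Set.mem_univ (y + a • w)) (Set.mem_univ (y + b • w)) hp hq hpq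
    have e : p • (y + a • w) + q • (y + b • w) = y + (p • a + q • b) • w := by
      have : y = (p + q) • y := by rw [hpq, one_smul]
      conv_rhs => rw [this]
      simp only [smul_add, add_smul, smul_smul, smul_eq_mul]
      abel
    rw [e] at this
    exact this
  have hl : ∀ s : ℝ, HasDerivAt (fun s : ℝ => y + s • w) w s := by
    intro s
    simpa using ((hasDerivAt_id s).smul_const w).const_add y
  have hd : ∀ s : ℝ, HasDerivAt (fun s : ℝ => φ (y + s • w) - μ / 2 * ‖y + s • w‖ ^ 2)
      (⟪u (y + s • w), w⟫ - μ / 2 * (2 * ⟪y + s • w, w⟫)) s := by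
    intro s
    have h1 := (hu (y + s • w)).hasFDerivAt.comp_hasDerivAt s (hl s)
    have h2 := ((hl s).norm_sq).const_mul (μ / 2)
    exact h1.sub h2
  have hm := hk.monotoneOn_deriv (fun s _ => (hd s).differentiableAt)
  intro a b hab
  have h := hm (Set.mem_univ a) (Set.mem_univ b) hab
  rw [(hd a).deriv, (hd b).deriv] at h
  simp only [inner_add_left, real_inner_smul_left, real_inner_self_eq_norm_sq] at h
  dsimp only
  nlinarith [h]

theorem aux_strong {φ : E → ℝ} {u : E → E} {μ : ℝ} (hu : ∀ y, HasGradientAt φ (u y) y)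
    (hs : StrongConvexOn Set.univ μ φ) (y z : E) :
    μ * ‖y - z‖ ^ 2 ≤ ⟪u y - u z, y - z⟫ := by
  have h := aux_mono_s14 hu hs z (y - z) (zero_le_one)
  simp only [zero_smul, add_zero, one_smul, add_sub_cancel, mul_zero, zero_mul, mul_one] at h
  rw [inner_sub_left]
  linarith

theorem aux_coer {φ : E → ℝ} {u : E → E} {μ : ℝ} (hu : ∀ y, HasGradientAt φ (u y) y)
    (hs : StrongConvexOn Set.univ μ φ) {y : E} {G : E →L[ℝ] E} (hG : HasFDerivAt u G y) (w : E) :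
    μ * ‖w‖ ^ 2 ≤ ⟪G w, w⟫ := by
  have hm := aux_mono_s14 hu hs y w
  have hl : HasDerivAt (fun s : ℝ => y + s • w) w 0 := by
    simpa using ((hasDerivAt_id (0:ℝ)).smul_const w).const_add y
  have hG' : HasFDerivAt u G (y + (0:ℝ) • w) := by simpa using hG
  have h1 := (hG'.comp_hasDerivAt (0:ℝ) hl).inner ℝ (hasDerivAt_const (0:ℝ) w)
  have h2 := ((hasDerivAt_id (0:ℝ)).const_mul μ).mul_const (‖w‖ ^ 2)
  have h3 := h1.sub h2
  have h4 := hm.deriv_nonneg (x := 0)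
  have h5 : deriv (fun s : ℝ => ⟪u (y + s • w), w⟫ - μ * s * ‖w‖ ^ 2) 0
    = ⟪G w, w⟫ - μ * ‖w‖ ^ 2 := by
    have := h3.deriv
    simp only [inner_zero_right, zero_add, mul_one] at this
    exact this
  rw [h5] at h4
  linarith

theorem aux_symm_s14 {φ : E → ℝ} {u : E → E} (hu : ∀ y, HasGradientAt φ (u y) y)
    {y : E} {G : E →L[ℝ] E} (hG : HasFDerivAt u G y) (v w : E) :
    ⟪G v, w⟫ = ⟪G w, v⟫ := by
  let B : E →L[ℝ] E →L[ℝ] ℝ :=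
    (isBoundedBilinearMap_inner (𝕜 := ℝ) (E := E)).toContinuousLinearMap
  have hf : ∀ z, HasFDerivAt φ (B (u z)) z := by
    intro z
    have := (hu z).hasFDerivAt
    have e : InnerProductSpace.toDual ℝ E (u z) = B (u z) := by
      ext w
      rfl
    exact this.congr_fderiv e
  have hx : HasFDerivAt (fun z => B (u z)) (B.comp G) y := B.hasFDerivAt.comp y hG
  exact second_derivative_symmetric hf hx v w

end aux

theorem aux_bound {E : Type*} [NormedAddCommGroup E] [InnerProductSpace ℝ E]
    {G : E →L[ℝ] E} {μ : ℝ} (hG : ∀ w, μ * ‖w‖ ^ 2 ≤ ⟪G w, w⟫) (w : E) :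
    μ * ‖w‖ ≤ ‖G w‖ := by
  by_cases hw : w = 0
  · simp [hw]
  have h1 := (hG w).trans (real_inner_le_norm _ _)
  have h2 : 0 < ‖w‖ := norm_pos_iff.2 hw
  by_contra! h
  nlinarith

theorem aux_core {X Y : Type*} [NormedAddCommGroup X] [InnerProductSpace ℝ X] [CompleteSpace X]
    [NormedAddCommGroup Y] [InnerProductSpace ℝ Y] [CompleteSpace Y]
    {Gx : X →L[ℝ] Y} {Gy : Y →L[ℝ] Y} {μ L lam : ℝ} (hμ : 0 < μ) (hL : ‖Gx‖ ≤ L)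
    (hco : ∀ w, μ * ‖w‖ ^ 2 ≤ ⟪Gy w, w⟫) (hsy : ∀ v w, ⟪Gy v, w⟫ = ⟪Gy w, v⟫)
    {a x' : X} {b y' u v : Y} (hv : Gy v = b)
    (hx : x' = -a - lam • ((2 : ℝ) • ContinuousLinearMap.adjoint Gx u))
    (hy : y' = -b - lam • ((2 : ℝ) • ContinuousLinearMap.adjoint Gy u)) :
    μ ^ 2 * ‖a - ContinuousLinearMap.adjoint Gx v‖ ^ 2
      ≤ (μ ^ 2 + L ^ 2) * (‖x'‖ ^ 2 + ‖y'‖ ^ 2) := by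
  have hadj : ContinuousLinearMap.adjoint Gy u = Gy u := by
    refine ext_inner_right ℝ fun w => ?_
    rw [ContinuousLinearMap.adjoint_inner_left, hsy, real_inner_comm]
  rw [hadj] at hy
  set w := v + lam • ((2 : ℝ) • u) with hw
  have hF : a - ContinuousLinearMap.adjoint Gx v = -x' - ContinuousLinearMap.adjoint Gx w := by
    rw [hx, hw]
    simp only [map_add, map_smul]
    abel
  have hGw : Gy w = -y' := by
    rw [hy, hw]
    simp only [map_add, map_smul, hv]
    abel
  have hL0 : 0 ≤ L := (norm_nonneg _).trans hL
  have h1 := aux_bound hco w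
  rw [hGw, norm_neg] at h1
  have h2 : ‖ContinuousLinearMap.adjoint Gx w‖ ≤ L * ‖w‖ := by
    refine (ContinuousLinearMap.le_opNorm _ _).trans ?_
    rw [LinearIsometryEquiv.norm_map]
    gcongr
  have h3 : ‖a - ContinuousLinearMap.adjoint Gx v‖ ≤ ‖x'‖ + L * ‖w‖ := by
    rw [hF]
    refine (norm_sub_le _ _).trans ?_
    rw [norm_neg]
    gcongr
  have h4 : μ * ‖a - ContinuousLinearMap.adjoint Gx v‖ ≤ μ * ‖x'‖ + L * ‖y'‖ := by
    have := mul_le_mul_of_nonneg_left h3 hμ.le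
    have := mul_le_mul_of_nonneg_left h1 hL0
    nlinarith
  have h5 : (μ * ‖a - ContinuousLinearMap.adjoint Gx v‖) ^ 2 ≤ (μ * ‖x'‖ + L * ‖y'‖) ^ 2 := by
    gcongr
  nlinarith [sq_nonneg (μ * ‖y'‖ - L * ‖x'‖)]

theorem aux_gradx {n m : ℕ} {f : Vec n → Vec m → ℝ} {x : Vec n} {y : Vec m}
    (hf : DifferentiableAt ℝ (Function.uncurry f) (x, y)) :
    HasGradientAt (fun x' => f x' y) (gradx f x y) x := by
  apply DifferentiableAt.hasGradientAt
  have h : DifferentiableAt ℝ (fun x' : Vec n => (x', y)) x := by fun_prop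
  exact hf.comp x h

theorem aux_grady {n m : ℕ} {f : Vec n → Vec m → ℝ} {x : Vec n} {y : Vec m}
    (hf : DifferentiableAt ℝ (Function.uncurry f) (x, y)) :
    HasGradientAt (fun y' => f x y') (grady f x y) y := by
  apply DifferentiableAt.hasGradientAt
  have h : DifferentiableAt ℝ (fun y' : Vec m => (x, y')) y := by fun_prop
  exact hf.comp y h

theorem aux_chain {n m : ℕ} {f : Vec n → Vec m → ℝ} {x : ℝ → Vec n} {y : ℝ → Vec m} {t : ℝ}
    {x' : Vec n} {y' : Vec m}
    (hf : DifferentiableAt ℝ (Function.uncurry f) (x t, y t))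
    (hx : HasDerivAt x x' t) (hy : HasDerivAt y y' t) :
    HasDerivAt (fun t => f (x t) (y t)) (⟪gradx f (x t) (y t), x'⟫ + ⟪grady f (x t) (y t), y'⟫) t := by
  have h := hf.hasFDerivAt.comp_hasDerivAt t (hx.prodMk hy)
  have hl : HasFDerivAt (fun x' : Vec n => (x', y t)) (ContinuousLinearMap.inl ℝ (Vec n) (Vec m)) (x t) :=
    hasFDerivAt_prodMk_left _ _
  have hr : HasFDerivAt (fun y' : Vec m => (x t, y')) (ContinuousLinearMap.inr ℝ (Vec n) (Vec m)) (y t) :=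
    hasFDerivAt_prodMk_right _ _
  have k1 := HasFDerivAt.comp (g := Function.uncurry f) (x t) hf.hasFDerivAt hl
  have h1 := HasFDerivAt.unique k1 (aux_gradx hf).hasFDerivAt
  have k2 := HasFDerivAt.comp (g := Function.uncurry f) (y t) hf.hasFDerivAt hr
  have h2 := HasFDerivAt.unique k2 (aux_grady hf).hasFDerivAt
  have e1 := congrArg (fun T => T x') h1
  have e2 := congrArg (fun T => T y') h2
  simp only [ContinuousLinearMap.comp_apply, ContinuousLinearMap.inl_apply,
    ContinuousLinearMap.inr_apply, InnerProductSpace.toDual_apply_apply] at e1 e2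
  rw [← e1, ← e2, ← map_add, Prod.mk_add_mk, add_zero, zero_add]
  exact h

theorem aux_normsq {X Y : Type*} [NormedAddCommGroup X] [InnerProductSpace ℝ X] [CompleteSpace X]
    [NormedAddCommGroup Y] [InnerProductSpace ℝ Y] [CompleteSpace Y]
    {U : X → Y} {G : X →L[ℝ] Y} {x : X} (h : HasFDerivAt U G x) :
    gradient (fun x => ‖U x‖ ^ 2) x = (2 : ℝ) • ContinuousLinearMap.adjoint G (U x) := by
  apply HasGradientAt.gradient
  rw [hasGradientAt_iff_hasFDerivAt]
  refine h.norm_sq.congr_fderiv ?_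
  ext w
  simp [ContinuousLinearMap.adjoint_inner_left]

set_option maxHeartbeats 800000 in
/-- Lyapunov decrease and ergodic rate for the relaxed safe gradient flow (RXGF):
with `c = μ_g²/(μ_g² + (L_{yx}^g)²)` and
`E(t) = f(x(t),y(t)) − f*_ε + c ∫₀ᵗ ‖F(x(τ),y(τ))‖² dτ`, one has `E(t) ≤ E(0)` for `t ≥ 0`, and
`(1/t)∫₀ᵗ ‖∇ℓ(x(τ))‖² dτ ≤ 2M₁²ε²/μ_g² + (2/(ct))(f(x(0),y(0)) − f*_ε)` for `t > 0`. -/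
theorem stmt_14 {n m : ℕ} (f g : Vec n → Vec m → ℝ)
    -- Assumption A1
    (hf : ContDiff ℝ 1 (Function.uncurry f))
    (Cxf Cyf : ℝ) (hCxf : 0 < Cxf) (hCyf : 0 < Cyf)
    (hfxB : ∀ x y, ‖gradx f x y‖ ≤ Cxf)
    (hfyB : ∀ x y, ‖grady f x y‖ ≤ Cyf)
    (Lxf Lyf : ℝ≥0)
    (hfxL : LipschitzWith Lxf fun p : Vec n × Vec m => gradx f p.1 p.2)
    (hfyL : LipschitzWith Lyf fun p : Vec n × Vec m => grady f p.1 p.2)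
    -- Assumption A2
    (hg : ContDiff ℝ 2 (Function.uncurry g))
    (μg : ℝ) (hμg : 0 < μg)
    (hsc : ∀ x, StrongConvexOn Set.univ μg (g x))
    (Lyyg Lyxg : ℝ≥0)
    (hgyLy : ∀ x, LipschitzWith Lyyg fun y => grady g x y)
    (hgyLx : ∀ y, LipschitzWith Lyxg fun x => grady g x y)
    (Gyx : Vec n → Vec m → Vec n →L[ℝ] Vec m)
    (Gyy : Vec n → Vec m → Vec m →L[ℝ] Vec m)
    (hGyx : ∀ x y, HasFDerivAt (fun x' => grady g x' y) (Gyx x y) x)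
    (hGyy : ∀ x y, HasFDerivAt (fun y' => grady g x y') (Gyy x y) y)
    (Cyxg Cyyg : ℝ≥0)
    (hGyxL : LipschitzWith Cyxg fun p : Vec n × Vec m => Gyx p.1 p.2)
    (hGyyL : LipschitzWith Cyyg fun p : Vec n × Vec m => Gyy p.1 p.2)
    -- lower-level solution map, surrogate direction `v`, and the constant `M₁`
    (ystar : Vec n → Vec m)
    (hystar : ∀ x', IsMinOn (g x') Set.univ (ystar x'))
    (v : Vec n → Vec m → Vec m)
    (hv : ∀ x' y', Gyy x' y' (v x' y') = grady f x' y')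
    (M₁ : ℝ) (hM₁ : 0 < M₁)
    (hM₁P : ∀ x' y',
      ‖gradient (fun x'' => f x'' (ystar x'')) x' - Fsur f Gyx v x' y'‖ ≤ M₁ * ‖y' - ystar x'‖)
    -- the relaxed safe gradient flow (RXGF) with parameters `α, ε > 0`, on `t ≥ 0`:
    (α ε : ℝ) (hα : 0 < α) (hε : 0 < ε)
    (x : ℝ → Vec n) (y : ℝ → Vec m) (lam : ℝ → ℝ)
    (hlam : ∀ t, 0 ≤ t →
      ((¬(gradx (hbar g) (x t) (y t) = 0 ∧ grady (hbar g) (x t) (y t) = 0)) →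
        lam t = max (-⟪gradx (hbar g) (x t) (y t), gradx f (x t) (y t)⟫
              - ⟪grady (hbar g) (x t) (y t), grady f (x t) (y t)⟫
              + α * (hbar g (x t) (y t) - ε ^ 2)) 0
          / (‖gradx (hbar g) (x t) (y t)‖ ^ 2 + ‖grady (hbar g) (x t) (y t)‖ ^ 2)) ∧
      ((gradx (hbar g) (x t) (y t) = 0 ∧ grady (hbar g) (x t) (y t) = 0) → lam t = 0))
    (hx : ∀ t, 0 ≤ t → HasDerivAt x
      (-gradx f (x t) (y t) - lam t • gradx (hbar g) (x t) (y t)) t)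
    (hy : ∀ t, 0 ≤ t → HasDerivAt y
      (-grady f (x t) (y t) - lam t • grady (hbar g) (x t) (y t)) t)
    -- the initial condition lies in the sublevel set
    (h0 : hbar g (x 0) (y 0) ≤ ε ^ 2)
    -- `f*_ε` is the optimal value of the relaxed problem `min f` s.t. `h(x,y) ≤ ε²`
    (fstarε : ℝ)
    (hfstarε : IsGLB {r : ℝ | ∃ (x' : Vec n) (y' : Vec m), hbar g x' y' ≤ ε ^ 2 ∧ f x' y' = r}
      fstarε)
    -- the constant `c` and the Lyapunov function `E`
    (c : ℝ) (hc : c = μg ^ 2 / (μg ^ 2 + (Lyxg : ℝ) ^ 2))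
    (EE : ℝ → ℝ)
    (hEE : ∀ t, EE t = f (x t) (y t) - fstarε
      + c * ∫ τ in (0:ℝ)..t, ‖Fsur f Gyx v (x τ) (y τ)‖ ^ 2) :
    (∀ t, 0 ≤ t → EE t ≤ EE 0) ∧
    (∀ t, 0 < t →
      (1 / t) * ∫ τ in (0:ℝ)..t, ‖gradient (fun x' => f x' (ystar x')) (x τ)‖ ^ 2
        ≤ 2 * M₁ ^ 2 * ε ^ 2 / μg ^ 2 + (2 / (c * t)) * (f (x 0) (y 0) - fstarε)) := by
  have hfd : ∀ p, DifferentiableAt ℝ (Function.uncurry f) p :=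
    fun p => (hf.differentiable one_ne_zero) p
  have hgd : ∀ p, DifferentiableAt ℝ (Function.uncurry g) p :=
    fun p => (hg.differentiable two_ne_zero) p
  have hgu : ∀ x y, HasGradientAt (g x) (grady g x y) y := fun x y => aux_grady (hgd (x, y))
  have hco : ∀ x y w, μg * ‖w‖ ^ 2 ≤ ⟪Gyy x y w, w⟫ := fun x y w =>
    aux_coer (hgu x) (hsc x) (hGyy x y) w
  have hsy : ∀ x y v w, ⟪Gyy x y v, w⟫ = ⟪Gyy x y w, v⟫ := fun x y v w =>
    aux_symm_s14 (hgu x) (hGyy x y) v w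
  have hL : ∀ x y, ‖Gyx x y‖ ≤ Lyxg := fun x y => (hGyx x y).le_of_lipschitz (hgyLx y)
  have hhx : ∀ x y, gradx (hbar g) x y
      = (2 : ℝ) • ContinuousLinearMap.adjoint (Gyx x y) (grady g x y) := fun x y =>
    aux_normsq (hGyx x y)
  have hhy : ∀ x y, grady (hbar g) x y
      = (2 : ℝ) • ContinuousLinearMap.adjoint (Gyy x y) (grady g x y) := fun x y =>
    aux_normsq (hGyy x y)
  have hc0 : 0 < c := by rw [hc]; positivity
  -- derivative of h along the flow
  have hU : ∀ p : Vec n × Vec m, HasFDerivAt (fun p : Vec n × Vec m => grady g p.1 p.2)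
      ((Gyx p.1 p.2).coprod (Gyy p.1 p.2)) p := fun p =>
    (hasStrictFDerivAt_uncurry_coprod (f := grady g) (f₁ := Gyx) (f₂ := Gyy) (u := p)
      (Filter.Eventually.of_forall fun q => hGyx q.1 q.2)
      (Filter.Eventually.of_forall fun q => hGyy q.1 q.2)
      hGyxL.continuous.continuousAt hGyyL.continuous.continuousAt).hasFDerivAt
  have hhd : ∀ t x' y', HasDerivAt x x' t → HasDerivAt y y' t →
      HasDerivAt (fun t => hbar g (x t) (y t))
        (⟪gradx (hbar g) (x t) (y t), x'⟫ + ⟪grady (hbar g) (x t) (y t), y'⟫) t := by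
    intro t x' y' h1 h2
    have h := (HasFDerivAt.comp_hasDerivAt t (hU (x t, y t)) (h1.prodMk h2)).norm_sq
    refine h.congr_deriv ?_
    rw [hhx, hhy]
    simp only [real_inner_smul_left, ContinuousLinearMap.adjoint_inner_left,
      ContinuousLinearMap.coprod_apply, inner_add_right, Function.comp_apply]
    ring
  -- the multiplier
  have hl0 : ∀ t, 0 ≤ t → 0 ≤ lam t := by
    intro t ht
    by_cases h : gradx (hbar g) (x t) (y t) = 0 ∧ grady (hbar g) (x t) (y t) = 0
    · rw [(hlam t ht).2 h]
    · rw [(hlam t ht).1 h]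
      positivity
  have hlN : ∀ t, 0 ≤ t → ¬(gradx (hbar g) (x t) (y t) = 0 ∧ grady (hbar g) (x t) (y t) = 0) →
      lam t * (‖gradx (hbar g) (x t) (y t)‖ ^ 2 + ‖grady (hbar g) (x t) (y t)‖ ^ 2)
      = max (-⟪gradx (hbar g) (x t) (y t), gradx f (x t) (y t)⟫
              - ⟪grady (hbar g) (x t) (y t), grady f (x t) (y t)⟫
              + α * (hbar g (x t) (y t) - ε ^ 2)) 0 := by
    intro t ht h
    rw [(hlam t ht).1 h]
    apply div_mul_cancel₀
    intro h'
    apply h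
    have a1 := sq_nonneg ‖gradx (hbar g) (x t) (y t)‖
    have a2 := sq_nonneg ‖grady (hbar g) (x t) (y t)‖
    constructor
    · exact norm_eq_zero.1 (pow_eq_zero_iff two_ne_zero |>.1 (by linarith))
    · exact norm_eq_zero.1 (pow_eq_zero_iff two_ne_zero |>.1 (by linarith))
  have hdh : ∀ t, ⟪gradx (hbar g) (x t) (y t),
        -gradx f (x t) (y t) - lam t • gradx (hbar g) (x t) (y t)⟫
      + ⟪grady (hbar g) (x t) (y t),
        -grady f (x t) (y t) - lam t • grady (hbar g) (x t) (y t)⟫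
      = -⟪gradx (hbar g) (x t) (y t), gradx f (x t) (y t)⟫
              - ⟪grady (hbar g) (x t) (y t), grady f (x t) (y t)⟫
        - lam t * (‖gradx (hbar g) (x t) (y t)‖ ^ 2 + ‖grady (hbar g) (x t) (y t)‖ ^ 2) := by
    intro t
    simp only [inner_sub_right, inner_neg_right, real_inner_smul_right, real_inner_self_eq_norm_sq]
    ring
  -- invariance
  have hinv : ∀ t, 0 ≤ t → hbar g (x t) (y t) ≤ ε ^ 2 := by
    have hder : ∀ t, 0 ≤ t → HasDerivAt
        (fun t => Real.exp (α * t) * (hbar g (x t) (y t) - ε ^ 2)) _ t := fun t ht =>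
      (((hasDerivAt_id t).const_mul α).exp).mul ((hhd t _ _ (hx t ht) (hy t ht)).sub_const (ε ^ 2))
    have hanti : AntitoneOn (fun t => Real.exp (α * t) * (hbar g (x t) (y t) - ε ^ 2)) (Ici 0) := by
      refine antitoneOn_of_deriv_nonpos (convex_Ici 0)
        (fun t ht => (hder t ht).continuousAt.continuousWithinAt) ?_ ?_
      · intro t ht
        rw [interior_Ici] at ht
        exact (hder t (le_of_lt ht)).differentiableAt.differentiableWithinAt
      · intro t ht
        rw [interior_Ici] at ht
        have ht' : (0:ℝ) ≤ t := le_of_lt ht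
        rw [(hder t ht').deriv, hdh t]
        have key : -⟪gradx (hbar g) (x t) (y t), gradx f (x t) (y t)⟫
              - ⟪grady (hbar g) (x t) (y t), grady f (x t) (y t)⟫
            - lam t * (‖gradx (hbar g) (x t) (y t)‖ ^ 2 + ‖grady (hbar g) (x t) (y t)‖ ^ 2)
            ≤ - (α * (hbar g (x t) (y t) - ε ^ 2)) := by
          by_cases h : gradx (hbar g) (x t) (y t) = 0 ∧ grady (hbar g) (x t) (y t) = 0
          · have hu0 : grady g (x t) (y t) = 0 := by
              have h2 := h.2
              rw [hhy] at h2
              have h3 : ContinuousLinearMap.adjoint (Gyy (x t) (y t)) (grady g (x t) (y t)) = 0 := by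
                simpa using h2
              have h4 := hco (x t) (y t) (grady g (x t) (y t))
              rw [← ContinuousLinearMap.adjoint_inner_right, h3, inner_zero_right] at h4
              have h5 : ‖grady g (x t) (y t)‖ ^ 2 ≤ 0 := by
                by_contra! h'
                nlinarith
              exact norm_eq_zero.1 (pow_eq_zero_iff two_ne_zero |>.1 (le_antisymm h5 (sq_nonneg _)))
            rw [h.1, h.2]
            have : hbar g (x t) (y t) = 0 := by simp [hbar, hu0]
            rw [this]
            simp only [inner_zero_left, norm_zero]
            have : 0 < α * ε ^ 2 := by positivity
            linarith
          · rw [hlN t ht' h]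
            have := le_max_left (-⟪gradx (hbar g) (x t) (y t), gradx f (x t) (y t)⟫
              - ⟪grady (hbar g) (x t) (y t), grady f (x t) (y t)⟫
              + α * (hbar g (x t) (y t) - ε ^ 2)) 0
            linarith
        have he := Real.exp_pos (α * t)
        have := mul_le_mul_of_nonneg_left key he.le
        simp only [id, mul_one]
        linarith
    intro t ht
    have h := hanti (mem_Ici.2 le_rfl) ht ht
    simp only [mul_zero, Real.exp_zero, one_mul] at h
    have he := Real.exp_pos (α * t)
    by_contra! h'
    have : 0 < Real.exp (α * t) * (hbar g (x t) (y t) - ε ^ 2) := mul_pos he (by linarith)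
    linarith
  -- descent
  have hdes : ∀ t, 0 ≤ t → ⟪gradx f (x t) (y t),
        -gradx f (x t) (y t) - lam t • gradx (hbar g) (x t) (y t)⟫
      + ⟪grady f (x t) (y t), -grady f (x t) (y t) - lam t • grady (hbar g) (x t) (y t)⟫
      ≤ - (c * ‖Fsur f Gyx v (x t) (y t)‖ ^ 2) := by
    intro t ht
    have hF : μg ^ 2 * ‖Fsur f Gyx v (x t) (y t)‖ ^ 2 ≤ _ :=
      aux_core (lam := lam t) hμg (hL (x t) (y t)) (hco (x t) (y t)) (hsy (x t) (y t))
        (hv (x t) (y t)) (by rw [← hhx]) (by rw [← hhy])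
    have hcF : c * ‖Fsur f Gyx v (x t) (y t)‖ ^ 2 ≤
        ‖-gradx f (x t) (y t) - lam t • gradx (hbar g) (x t) (y t)‖ ^ 2
        + ‖-grady f (x t) (y t) - lam t • grady (hbar g) (x t) (y t)‖ ^ 2 := by
      rw [hc, div_mul_eq_mul_div, div_le_iff₀ (by positivity), mul_comm _ (μg ^ 2 + _)]
      exact hF
    have hs : 0 ≤ lam t * (⟪gradx (hbar g) (x t) (y t),
        -gradx f (x t) (y t) - lam t • gradx (hbar g) (x t) (y t)⟫
      + ⟪grady (hbar g) (x t) (y t),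
        -grady f (x t) (y t) - lam t • grady (hbar g) (x t) (y t)⟫) := by
      by_cases h : gradx (hbar g) (x t) (y t) = 0 ∧ grady (hbar g) (x t) (y t) = 0
      · rw [(hlam t ht).2 h, zero_mul]
      · rcases (hl0 t ht).eq_or_lt with h0' | hpos
        · rw [← h0', zero_mul]
        refine mul_nonneg hpos.le ?_
        rw [hdh]
        have hN := hlN t ht h
        rcases le_total (-⟪gradx (hbar g) (x t) (y t), gradx f (x t) (y t)⟫
              - ⟪grady (hbar g) (x t) (y t), grady f (x t) (y t)⟫
              + α * (hbar g (x t) (y t) - ε ^ 2)) 0 with hm | hm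
        · exfalso
          have h1 := (hlam t ht).1 h
          rw [max_eq_right hm, zero_div] at h1
          linarith
        · rw [max_eq_left hm] at hN
          rw [hN]
          have := mul_nonneg hα.le (sub_nonneg.2 (hinv t ht))
          linarith
    have e : ⟪gradx f (x t) (y t),
        -gradx f (x t) (y t) - lam t • gradx (hbar g) (x t) (y t)⟫
      + ⟪grady f (x t) (y t), -grady f (x t) (y t) - lam t • grady (hbar g) (x t) (y t)⟫
      = - (‖-gradx f (x t) (y t) - lam t • gradx (hbar g) (x t) (y t)‖ ^ 2
        + ‖-grady f (x t) (y t) - lam t • grady (hbar g) (x t) (y t)‖ ^ 2)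
        - lam t * (⟪gradx (hbar g) (x t) (y t),
        -gradx f (x t) (y t) - lam t • gradx (hbar g) (x t) (y t)⟫
      + ⟪grady (hbar g) (x t) (y t),
        -grady f (x t) (y t) - lam t • grady (hbar g) (x t) (y t)⟫) := by
      simp only [← real_inner_self_eq_norm_sq, inner_sub_right, inner_sub_left, inner_neg_right,
        inner_neg_left, real_inner_smul_right, real_inner_smul_left]
      rw [real_inner_comm (gradx f (x t) (y t)) (gradx (hbar g) (x t) (y t)),
        real_inner_comm (grady f (x t) (y t)) (grady (hbar g) (x t) (y t))]
      ring
    rw [e]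
    linarith
  -- continuity
  have hvc : Continuous fun p : Vec n × Vec m => v p.1 p.2 := by
    rw [continuous_iff_continuousAt]
    intro q
    have hb : ∀ p : Vec n × Vec m, ‖v p.1 p.2 - v q.1 q.2‖ ≤
        μg⁻¹ * ‖(grady f p.1 p.2 - grady f q.1 q.2)
          + (Gyy q.1 q.2 - Gyy p.1 p.2) (v q.1 q.2)‖ := by
      intro p
      have h1 := aux_bound (hco p.1 p.2) (v p.1 p.2 - v q.1 q.2)
      have h2 : Gyy p.1 p.2 (v p.1 p.2 - v q.1 q.2) = (grady f p.1 p.2 - grady f q.1 q.2)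
          + (Gyy q.1 q.2 - Gyy p.1 p.2) (v q.1 q.2) := by
        rw [map_sub, sub_apply, hv, hv]
        abel
      rw [h2] at h1
      rw [inv_mul_eq_div, le_div_iff₀ hμg]
      linarith
    have hc1 := hfyL.continuous
    have hc2 := hGyyL.continuous
    have hcc : Continuous fun p : Vec n × Vec m =>
        μg⁻¹ * ‖(grady f p.1 p.2 - grady f q.1 q.2)
          + (Gyy q.1 q.2 - Gyy p.1 p.2) (v q.1 q.2)‖ :=
      continuous_const.mul ((hc1.sub continuous_const).add
        ((continuous_const.sub hc2).clm_apply continuous_const)).norm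
    have ht := hcc.tendsto q
    simp only [sub_self, zero_apply, add_zero, norm_zero, mul_zero] at ht
    exact tendsto_iff_norm_sub_tendsto_zero.2
      (squeeze_zero (fun _ => norm_nonneg _) hb ht)
  have hFc : Continuous fun p : Vec n × Vec m => ‖Fsur f Gyx v p.1 p.2‖ ^ 2 := by
    have ha : Continuous fun p : Vec n × Vec m => ContinuousLinearMap.adjoint (Gyx p.1 p.2) :=
      (LinearIsometryEquiv.continuous _).comp hGyxL.continuous
    have h1 : Continuous fun p : Vec n × Vec m =>
        ContinuousLinearMap.adjoint (Gyx p.1 p.2) (v p.1 p.2) := ha.clm_apply hvc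
    have h2 : Continuous fun p : Vec n × Vec m => Fsur f Gyx v p.1 p.2 :=
      hfxL.continuous.sub h1
    exact h2.norm.pow 2
  have hFt : ∀ t, ContinuousOn (fun τ => ‖Fsur f Gyx v (x τ) (y τ)‖ ^ 2) (Icc 0 t) := by
    intro t
    have hp : ContinuousOn (fun τ => (x τ, y τ)) (Icc 0 t) := fun τ hτ =>
      ((hx τ hτ.1).continuousAt.prodMk (hy τ hτ.1).continuousAt).continuousWithinAt
    exact Continuous.comp_continuousOn
      (g := fun p : Vec n × Vec m => ‖Fsur f Gyx v p.1 p.2‖ ^ 2) (f := fun τ => (x τ, y τ)) hFc hp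
  have hdec : ∀ t, 0 ≤ t → f (x t) (y t) - f (x 0) (y 0) ≤
      - (c * ∫ τ in (0:ℝ)..t, ‖Fsur f Gyx v (x τ) (y τ)‖ ^ 2) := by
    intro t ht
    have hd : ∀ τ, 0 ≤ τ → HasDerivAt (fun t => f (x t) (y t)) _ τ := fun τ hτ =>
      aux_chain (hfd (x τ, y τ)) (hx τ hτ) (hy τ hτ)
    have h := intervalIntegral.sub_le_integral_of_hasDeriv_right_of_le ht
      (fun τ hτ => (hd τ hτ.1).continuousAt.continuousWithinAt)
      (fun τ hτ => (hd τ hτ.1.le).hasDerivWithinAt)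
      (φ := fun τ => - (c * ‖Fsur f Gyx v (x τ) (y τ)‖ ^ 2))
      ((continuousOn_const.mul (hFt t)).neg.integrableOn_Icc)
      (fun τ hτ => hdes τ hτ.1.le)
    rw [intervalIntegral.integral_neg, intervalIntegral.integral_const_mul] at h
    exact h
  have hlow : ∀ t, 0 ≤ t → fstarε ≤ f (x t) (y t) := fun t ht =>
    hfstarε.1 ⟨x t, y t, hinv t ht, rfl⟩
  refine ⟨?_, ?_⟩
  · intro t ht
    rw [hEE, hEE, intervalIntegral.integral_same]
    have := hdec t ht
    linarith
  · intro t ht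
    have hRHS : 0 ≤ 2 * M₁ ^ 2 * ε ^ 2 / μg ^ 2 + (2 / (c * t)) * (f (x 0) (y 0) - fstarε) := by
      have := sub_nonneg.2 (hlow 0 le_rfl)
      positivity
    by_cases hint : IntervalIntegrable
      (fun τ => ‖gradient (fun x' => f x' (ystar x')) (x τ)‖ ^ 2) volume 0 t
    swap
    · rw [intervalIntegral.integral_undef hint, mul_zero]
      exact hRHS
    have hFi : IntervalIntegrable (fun τ => ‖Fsur f Gyx v (x τ) (y τ)‖ ^ 2) volume 0 t :=
      ContinuousOn.intervalIntegrable_of_Icc ht.le (hFt t)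
    have hmono := intervalIntegral.integral_mono_on ht.le hint
      (g := fun τ => 2 * ‖Fsur f Gyx v (x τ) (y τ)‖ ^ 2 + 2 * M₁ ^ 2 * ε ^ 2 / μg ^ 2)
      ((hFi.const_mul 2).add intervalIntegrable_const) (by
        intro τ hτ
        have h1 := hM₁P (x τ) (y τ)
        have h2 : ‖y τ - ystar (x τ)‖ ≤ ε / μg := by
          have hz : grady g (x τ) (ystar (x τ)) = 0 := by
            have hloc : IsLocalMin (g (x τ)) (ystar (x τ)) :=
              (hystar (x τ)).isLocalMin Filter.univ_mem
            have h := hloc.hasFDerivAt_eq_zero (hgu (x τ) (ystar (x τ))).hasFDerivAt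
            simpa using h
          have hst := aux_strong (hgu (x τ)) (hsc (x τ)) (y τ) (ystar (x τ))
          rw [hz, sub_zero] at hst
          have hcs := hst.trans (real_inner_le_norm _ _)
          have hu : ‖grady g (x τ) (y τ)‖ ≤ ε :=
            le_of_sq_le_sq (hinv τ hτ.1) hε.le
          rw [le_div_iff₀ hμg]
          by_contra! h'
          have hpos : 0 < ‖y τ - ystar (x τ)‖ := by
            by_contra! h''
            nlinarith
          nlinarith
        have h3 : ‖gradient (fun x' => f x' (ystar x')) (x τ)‖
            ≤ ‖Fsur f Gyx v (x τ) (y τ)‖ + M₁ * (ε / μg) := by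
          have := norm_le_norm_add_norm_sub' (gradient (fun x' => f x' (ystar x')) (x τ))
            (Fsur f Gyx v (x τ) (y τ))
          have := mul_le_mul_of_nonneg_left h2 hM₁.le
          linarith
        have h4 : ‖gradient (fun x' => f x' (ystar x')) (x τ)‖ ^ 2
            ≤ (‖Fsur f Gyx v (x τ) (y τ)‖ + M₁ * (ε / μg)) ^ 2 := by gcongr
        have h5 : 2 * M₁ ^ 2 * ε ^ 2 / μg ^ 2 = 2 * (M₁ * (ε / μg)) ^ 2 := by
          field_simp
        rw [h5]
        nlinarith [sq_nonneg (‖Fsur f Gyx v (x τ) (y τ)‖ - M₁ * (ε / μg))])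
    rw [intervalIntegral.integral_add (hFi.const_mul 2) intervalIntegrable_const,
      intervalIntegral.integral_const_mul, intervalIntegral.integral_const, smul_eq_mul,
      sub_zero] at hmono
    have hd := hdec t ht.le
    have hlo := hlow t ht.le
    set I := ∫ τ in (0:ℝ)..t, ‖Fsur f Gyx v (x τ) (y τ)‖ ^ 2
    have hI : I ≤ (f (x 0) (y 0) - fstarε) / c := by
      rw [le_div_iff₀ hc0]
      linarith
    calc _ ≤ (1 / t) * (2 * ((f (x 0) (y 0) - fstarε) / c) + t * (2 * M₁ ^ 2 * ε ^ 2 / μg ^ 2)) := by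
          gcongr
          linarith
      _ = _ := by
          field_simp
          ring

end
end

section
/- Suppose Assumption A2 holds and let β > 0. Let t ↦ (x(t), y(t)), t ≥ 0, be a continuously differentiable solution of the prediction-correction dynamics. Then for every t ≥ 0, ‖y(t) − y*(x(t))‖ ≤ (1/μ_g) ‖∇_y g(x(0), y(0))‖ e^{−β t}. -/
open Set MeasureTheory
open scoped NNReal RealInnerProductSpace

noncomputable section

lemma aux_hasGrad {n m : ℕ} (g : Vec n → Vec m → ℝ)
    (hg : ContDiff ℝ 2 (Function.uncurry g)) (x : Vec n) (y : Vec m) :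
    HasFDerivAt (g x) ((fderiv ℝ (Function.uncurry g) (x, y)).comp
      (ContinuousLinearMap.inr ℝ (Vec n) (Vec m))) y := by
  have h1 : HasFDerivAt (Function.uncurry g) (fderiv ℝ (Function.uncurry g) (x, y)) (x, y) :=
    (hg.differentiable (by norm_num) (x, y)).hasFDerivAt
  exact h1.comp y (hasFDerivAt_prodMk_right x y)

lemma aux_grady_s16 {n m : ℕ} (g : Vec n → Vec m → ℝ)
    (hg : ContDiff ℝ 2 (Function.uncurry g)) (x : Vec n) (y : Vec m) :
    grady g x y = (InnerProductSpace.toDual ℝ (Vec m)).symm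
      ((fderiv ℝ (Function.uncurry g) (x, y)).comp
      (ContinuousLinearMap.inr ℝ (Vec n) (Vec m))) := by
  unfold grady gradient
  rw [(aux_hasGrad g hg x y).fderiv]

lemma aux_diff {n m : ℕ} (g : Vec n → Vec m → ℝ)
    (hg : ContDiff ℝ 2 (Function.uncurry g)) :
    Differentiable ℝ (fun p : Vec n × Vec m => grady g p.1 p.2) := by
  have h1 : Differentiable ℝ (fderiv ℝ (Function.uncurry g)) :=
    (hg.fderiv_right (m := 1) (by norm_num)).differentiable (by norm_num)
  have h2 : Differentiable ℝ (fun p : Vec n × Vec m =>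
      (fderiv ℝ (Function.uncurry g) p).comp (ContinuousLinearMap.inr ℝ (Vec n) (Vec m))) :=
    h1.clm_comp (differentiable_const _)
  have h3 := (InnerProductSpace.toDual ℝ (Vec m)).symm.toContinuousLinearEquiv.differentiable.comp h2
  have e : (fun p : Vec n × Vec m => grady g p.1 p.2) = fun p =>
      (InnerProductSpace.toDual ℝ (Vec m)).symm ((fderiv ℝ (Function.uncurry g) p).comp
      (ContinuousLinearMap.inr ℝ (Vec n) (Vec m))) := by
    funext p
    exact aux_grady_s16 g hg p.1 p.2
  rw [e]
  exact h3

lemma aux_strong_s16 {m : ℕ} (h : Vec m → ℝ) (G : Vec m → Vec m)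
    (hG : ∀ y, HasGradientAt h (G y) y) (μ : ℝ) (hμ : 0 < μ)
    (hsc : StrongConvexOn Set.univ μ h) (z : Vec m) (hz : IsMinOn h Set.univ z) (y : Vec m) :
    μ * ‖y - z‖ ≤ ‖G y‖ := by
  have hz0 : G z = 0 := by
    have h1 : IsLocalMin h z := hz.isLocalMin Filter.univ_mem
    have h2 := h1.hasFDerivAt_eq_zero (hG z).hasFDerivAt
    simpa using h2
  have hc := strongConvexOn_iff_convex.1 hsc
  have hc2 := hc.comp_affineMap (AffineMap.lineMap z y : ℝ →ᵃ[ℝ] Vec m)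
  rw [Set.preimage_univ] at hc2
  have hd : ∀ s : ℝ, HasDerivAt ((fun x => h x - μ / 2 * ‖x‖ ^ 2) ∘ (AffineMap.lineMap z y : ℝ →ᵃ[ℝ] Vec m))
      (⟪G (AffineMap.lineMap z y s), y - z⟫ - μ / 2 * (2 * ⟪(AffineMap.lineMap z y s : Vec m), y - z⟫)) s := by
    intro s
    have hl : HasDerivAt (AffineMap.lineMap z y : ℝ → Vec m) (y - z) s :=
      AffineMap.hasDerivAt_lineMap
    have a := (hG (AffineMap.lineMap z y s)).hasFDerivAt.comp_hasDerivAt s hl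
    have b := (hl.norm_sq).const_mul (μ / 2)
    have c := a.sub b
    refine HasDerivAt.congr_deriv (f := (fun x => h x - μ / 2 * ‖x‖ ^ 2) ∘ (AffineMap.lineMap z y : ℝ →ᵃ[ℝ] Vec m)) c ?_
    simp
  have i0 := hc2.le_slope_of_hasDerivAt (Set.mem_univ 0) (Set.mem_univ 1) one_pos (hd 0)
  have i1 := hc2.slope_le_of_hasDerivAt (Set.mem_univ 0) (Set.mem_univ 1) one_pos (hd 1)
  have i := i0.trans i1
  simp only [AffineMap.lineMap_apply_zero, AffineMap.lineMap_apply_one, hz0, inner_zero_left] at i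
  have e : ⟪y, y - z⟫ - ⟪z, y - z⟫ = ‖y - z‖ * ‖y - z‖ := by
    rw [← inner_sub_left, real_inner_self_eq_norm_mul_norm]
  have k := real_inner_le_norm (G y) (y - z)
  by_cases hn : ‖y - z‖ = 0
  · rw [hn]; simp
  · have hp : 0 < ‖y - z‖ := lt_of_le_of_ne (norm_nonneg _) (Ne.symm hn)
    refine le_of_mul_le_mul_right ?_ hp
    have : μ * (‖y - z‖ * ‖y - z‖) = μ * ⟪y, y - z⟫ - μ * ⟪z, y - z⟫ := by rw [← e]; ring
    linarith

/-- along the prediction-correction dynamics, the lower-level trajectory contracts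
to the optimal trajectory: `‖y(t) − y*(x(t))‖ ≤ (1/μ_g)‖∇_y g(x(0),y(0))‖ e^{−βt}`. -/
theorem stmt_16 {n m : ℕ} (f g : Vec n → Vec m → ℝ)
    (hf : ContDiff ℝ 1 (Function.uncurry f))
    -- Assumption A2
    (hg : ContDiff ℝ 2 (Function.uncurry g))
    (μg : ℝ) (hμg : 0 < μg)
    (hsc : ∀ x, StrongConvexOn Set.univ μg (g x))
    (Lyyg Lyxg : ℝ≥0)
    (hgyLy : ∀ x, LipschitzWith Lyyg fun y => grady g x y)
    (hgyLx : ∀ y, LipschitzWith Lyxg fun x => grady g x y)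
    (Gyx : Vec n → Vec m → Vec n →L[ℝ] Vec m)
    (Gyy : Vec n → Vec m → Vec m →L[ℝ] Vec m)
    (hGyx : ∀ x y, HasFDerivAt (fun x' => grady g x' y) (Gyx x y) x)
    (hGyy : ∀ x y, HasFDerivAt (fun y' => grady g x y') (Gyy x y) y)
    (Cyxg Cyyg : ℝ≥0)
    (hGyxL : LipschitzWith Cyxg fun p : Vec n × Vec m => Gyx p.1 p.2)
    (hGyyL : LipschitzWith Cyyg fun p : Vec n × Vec m => Gyy p.1 p.2)
    -- lower-level solution map and surrogate direction `v`
    (ystar : Vec n → Vec m)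
    (hystar : ∀ x', IsMinOn (g x') Set.univ (ystar x'))
    (v : Vec n → Vec m → Vec m)
    (hv : ∀ x' y', Gyy x' y' (v x' y') = grady f x' y')
    -- the prediction-correction dynamics with parameter `β > 0`, on `t ≥ 0`:
    -- `ẋ = −F(x,y)`, `ẏ = −[∇²_{yy}g]⁻¹ (β ∇_y g + ∇²_{yx}g ẋ)`
    (β : ℝ) (hβ : 0 < β)
    (x : ℝ → Vec n) (y : ℝ → Vec m) (yd : ℝ → Vec m)
    (hx : ∀ t, 0 ≤ t → HasDerivAt x (-Fsur f Gyx v (x t) (y t)) t)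
    (hy : ∀ t, 0 ≤ t → HasDerivAt y (yd t) t)
    (hyd : ∀ t, 0 ≤ t →
      Gyy (x t) (y t) (yd t)
        = -(β • grady g (x t) (y t) + Gyx (x t) (y t) (-Fsur f Gyx v (x t) (y t))))
    :
    ∀ t, 0 ≤ t →
      ‖y t - ystar (x t)‖ ≤ (1 / μg) * ‖grady g (x 0) (y 0)‖ * Real.exp (-β * t) := by
  intro t ht
  have hGd : ∀ a b, HasGradientAt (g a) (grady g a b) b := fun a b =>
    (aux_hasGrad g hg a b).differentiableAt.hasGradientAt
  have hs := aux_strong_s16 (g (x t)) (grady g (x t)) (hGd _) μg hμg (hsc _) _ (hystar (x t)) (y t)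
  have hpart : ∀ a b u w, fderiv ℝ (fun p : Vec n × Vec m => grady g p.1 p.2) (a, b) (u, w)
      = Gyx a b u + Gyy a b w := by
    intro a b u w
    have h0 := (aux_diff g hg (a, b)).hasFDerivAt
    have h1 := (HasFDerivAt.comp (g := fun p : Vec n × Vec m => grady g p.1 p.2)
      (f := fun e => (e, b)) a h0 (hasFDerivAt_prodMk_left a b)).unique (hGyx a b)
    have h2 := (HasFDerivAt.comp (g := fun p : Vec n × Vec m => grady g p.1 p.2)
      (f := fun e => (a, e)) b h0 (hasFDerivAt_prodMk_right a b)).unique (hGyy a b)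
    rw [← h1, ← h2]
    simp [← map_add]
  have hD : ∀ s, 0 ≤ s → HasDerivAt (fun s => grady g (x s) (y s))
      (-(β • grady g (x s) (y s))) s := by
    intro s hs
    have h0 := (aux_diff g hg (x s, y s)).hasFDerivAt
    have h1 := h0.comp_hasDerivAt s ((hx s hs).prodMk (hy s hs))
    rw [hpart, hyd s hs] at h1
    refine HasDerivAt.congr_deriv (f := fun s => grady g (x s) (y s)) h1 ?_
    abel
  have hE : ∀ s, 0 ≤ s → HasDerivAt (fun s => Real.exp (β * s) • grady g (x s) (y s)) 0 s := by
    intro s hs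
    have h1 : HasDerivAt (fun s => Real.exp (β * s)) (Real.exp (β * s) * β) s := by
      simpa using ((hasDerivAt_id s).const_mul β).exp
    refine HasDerivAt.congr_deriv (f := fun s => Real.exp (β * s) • grady g (x s) (y s))
      (h1.smul (hD s hs)) ?_
    rw [smul_neg, smul_smul]
    simp
  have hconst := constant_of_has_deriv_right_zero (a := 0) (b := t)
    (fun s hs => (hE s hs.1).continuousAt.continuousWithinAt)
    (fun s hs => (hE s hs.1).hasDerivWithinAt) t ⟨ht, le_rfl⟩
  simp only [mul_zero, Real.exp_zero, one_smul] at hconst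
  have hn : ‖grady g (x 0) (y 0)‖ = Real.exp (β * t) * ‖grady g (x t) (y t)‖ := by
    rw [← hconst, norm_smul, Real.norm_eq_abs, abs_of_pos (Real.exp_pos _)]
  have he : Real.exp (β * t) * Real.exp (-β * t) = 1 := by
    rw [← Real.exp_add]; simp
  have : 1 / μg * ‖grady g (x 0) (y 0)‖ * Real.exp (-β * t) = ‖grady g (x t) (y t)‖ / μg := by
    rw [hn]
    calc _ = (Real.exp (β * t) * Real.exp (-β * t)) * (‖grady g (x t) (y t)‖ / μg) := by ring
      _ = _ := by rw [he, one_mul]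
  rw [this, le_div_iff₀ hμg]
  linarith

end
end
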